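/- arXiv:2510.00811 — 4 statements merged into one kernel-verified Lean document; each statement's English description precedes it below -/
import Mathlib

section
/- Let Ω ⊆ ℝ^d be an unbounded open set with Σ(Ω) < ∞ (i.e. the set { λ(Ω \ K) : K compact } is bounded above). Then for every k ≥ 1 there exists a k-partition (ω₁,…,ω_k) of Ω such that λ(ωᵢ) ≤ Σ(Ω) for every i = 1,…,k. In particular, Λ_{k,∞}(Ω) ≤ Σ(Ω) for every k ≥ 1. -/
/-!
Each `λ(Ω \ K)` with `K` compact is at most `Σ(Ω)`, so far from the origin there are always test
functions with Rayleigh quotient below `Σ(Ω) + ε` (`exists_test_beyond`). Iterating with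
`ε = 1/(n+1)`, each time outside a ball containing the previous support, gives test functions `u n`
supported in `Ω` intersected with pairwise disjoint annuli. A single annulus only yields
`λ ≤ Σ(Ω) + 1/(n+1)`; but if each cell is a union of infinitely many of these pieces, then every
one of its infinitely many test functions bounds `λ` from above, and the error term disappears.
The infinite families are separated by the pairing function: cell `i` uses the indices
`Nat.pair i m`, `m ∈ ℕ`.
-/

open MeasureTheory Metric Set Filter
open scoped ENNReal Topology

noncomputable section

/-- Euclidean space `ℝ^d`. -/
abbrev Euc (d : ℕ) : Type := EuclideanSpace ℝ (Fin d)

/-- The Rayleigh quotient `R_V(u)` of the Schrödinger operator `-Δ + V`. -/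
def RayleighQ (d : ℕ) (V : Euc d → ℝ) (u : Euc d → ℝ) : ℝ :=
  (∫ x, (‖gradient u x‖ ^ 2 + V x * u x ^ 2)) / (∫ x, u x ^ 2)

/-- `λ(ω)`: bottom of the spectrum of `-Δ + V` with Dirichlet conditions on `ω`,
via the variational characterization over smooth compactly supported test functions
supported in `ω`. -/
def lambdaLow (d : ℕ) (V : Euc d → ℝ) (ω : Set (Euc d)) : ℝ :=
  sInf { r : ℝ | ∃ u : Euc d → ℝ, ContDiff ℝ (⊤ : ℕ∞) u ∧ HasCompactSupport u ∧ u ≠ 0 ∧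
    tsupport u ⊆ ω ∧ r = RayleighQ d V u }

/-- The set `{ λ(ω \ K) : K ⊆ ℝ^d compact }` appearing in Persson's characterization
of the bottom of the essential spectrum. -/
def specSet (d : ℕ) (V : Euc d → ℝ) (ω : Set (Euc d)) : Set ℝ :=
  { r : ℝ | ∃ K : Set (Euc d), IsCompact K ∧ r = lambdaLow d V (ω \ K) }

/-- `Σ(ω) := sup { λ(ω \ K) : K compact } ∈ [0,∞]`, as an extended real number. -/
def SigmaE (d : ℕ) (V : Euc d → ℝ) (ω : Set (Euc d)) : ℝ≥0∞ :=
  ⨆ K : { K : Set (Euc d) // IsCompact K }, ENNReal.ofReal (lambdaLow d V (ω \ K.1))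

/-- `Σ(ω)` as a real number (meaningful when `specSet` is bounded above,
i.e. when `Σ(ω) < ∞`). -/
def SigmaR (d : ℕ) (V : Euc d → ℝ) (ω : Set (Euc d)) : ℝ :=
  sSup (specSet d V ω)

/-- Open annulus `A_{r,R}(0) = { x : r < |x| < R }`. -/
def annulusO (d : ℕ) (r R : ℝ) : Set (Euc d) := { x : Euc d | r < ‖x‖ ∧ ‖x‖ < R }

/-- A `k`-partition of `Ω`: a `k`-tuple of pairwise disjoint nonempty open subsets of `Ω`. -/
def IsPartition (d : ℕ) (Ω : Set (Euc d)) {k : ℕ} (ω : Fin k → Set (Euc d)) : Prop :=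
  (∀ i, IsOpen (ω i)) ∧ (∀ i, (ω i).Nonempty) ∧ (∀ i, ω i ⊆ Ω) ∧
    ∀ i j, i ≠ j → Disjoint (ω i) (ω j)

/-- `Λ_{k,p}(Ω) := inf (∑ i λ(ωᵢ)^p)^(1/p)` over all `k`-partitions of `Ω`, `1 ≤ p < ∞`. -/
def LamP (d : ℕ) (V : Euc d → ℝ) (Ω : Set (Euc d)) (k : ℕ) (p : ℝ) : ℝ :=
  sInf { r : ℝ | ∃ ω : Fin k → Set (Euc d), IsPartition d Ω ω ∧
    r = (∑ i, lambdaLow d V (ω i) ^ p) ^ (1 / p) }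

/-- `Λ_{k,∞}(Ω) := inf max_i λ(ωᵢ)` over all `k`-partitions of `Ω`. -/
def LamInf (d : ℕ) (V : Euc d → ℝ) (Ω : Set (Euc d)) (k : ℕ) : ℝ :=
  sInf { r : ℝ | ∃ ω : Fin k → Set (Euc d), IsPartition d Ω ω ∧
    r = ⨆ i, lambdaLow d V (ω i) }

/-- Threshold value `T_{k,p}(Ω) := (Λ_{k-1,p}(Ω)^p + Σ(Ω)^p)^(1/p)` for `1 ≤ p < ∞`. -/
def ThreshT (d : ℕ) (V : Euc d → ℝ) (Ω : Set (Euc d)) (k : ℕ) (p : ℝ) : ℝ :=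
  (LamP d V Ω (k - 1) p ^ p + SigmaR d V Ω ^ p) ^ (1 / p)

lemma rayleighQ_nonneg {d : ℕ} {V : Euc d → ℝ} (hV : ∀ x, 0 ≤ V x) (u : Euc d → ℝ) :
    0 ≤ RayleighQ d V u :=
  div_nonneg
    (integral_nonneg fun x => add_nonneg (sq_nonneg _) (mul_nonneg (hV x) (sq_nonneg _)))
    (integral_nonneg fun _ => sq_nonneg _)

lemma lambdaLow_nonneg {d : ℕ} {V : Euc d → ℝ} (hV : ∀ x, 0 ≤ V x) (ω : Set (Euc d)) :
    0 ≤ lambdaLow d V ω := by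
  apply Real.sInf_nonneg
  rintro r ⟨u, -, -, -, -, rfl⟩
  exact rayleighQ_nonneg hV u

lemma lambdaLow_le {d : ℕ} {V : Euc d → ℝ} (hV : ∀ x, 0 ≤ V x) {ω : Set (Euc d)}
    {u : Euc d → ℝ} (h1 : ContDiff ℝ (⊤ : ℕ∞) u) (h2 : HasCompactSupport u) (h3 : u ≠ 0)
    (h4 : tsupport u ⊆ ω) : lambdaLow d V ω ≤ RayleighQ d V u := by
  refine csInf_le ⟨0, ?_⟩ ⟨u, h1, h2, h3, h4, rfl⟩
  rintro r ⟨u, -, -, -, -, rfl⟩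
  exact rayleighQ_nonneg hV u

/-- Outside any ball there is a test function with Rayleigh quotient close to `Σ(Ω)`. Unboundedness
of `Ω` makes the set of test functions nonempty, so that `lambdaLow` is a genuine infimum. -/
lemma exists_test_beyond {d : ℕ} {V : Euc d → ℝ} {Ω : Set (Euc d)} (hΩ : IsOpen Ω)
    (hunb : ¬ Bornology.IsBounded Ω) (hbdd : BddAbove (specSet d V Ω))
    {ε : ℝ} (hε : 0 < ε) (r : ℝ) :
    ∃ (u : Euc d → ℝ) (R : ℝ), r < R ∧ ContDiff ℝ (⊤ : ℕ∞) u ∧ HasCompactSupport u ∧ u ≠ 0 ∧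
      tsupport u ⊆ Ω ∩ annulusO d r R ∧ RayleighQ d V u < SigmaR d V Ω + ε := by
  have hK : IsCompact (closedBall (0 : Euc d) r) := isCompact_closedBall 0 r
  have hle : lambdaLow d V (Ω \ closedBall 0 r) ≤ SigmaR d V Ω := le_csSup hbdd ⟨_, hK, rfl⟩
  have hopen : IsOpen (Ω \ closedBall (0 : Euc d) r) := hΩ.sdiff isClosed_closedBall
  obtain ⟨x, hx⟩ : (Ω \ closedBall (0 : Euc d) r).Nonempty := by
    by_contra h
    rw [not_nonempty_iff_eq_empty, sdiff_eq_empty] at h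
    exact hunb (isBounded_closedBall.subset h)
  obtain ⟨f, hf1, hf2, hf3, -, hf5⟩ :=
    exists_contDiff_tsupport_subset (n := ⊤) (hopen.mem_nhds hx)
  have hf0 : f ≠ 0 := fun h => by simp [h] at hf5
  have hlt := hle.trans_lt (lt_add_of_pos_right (SigmaR d V Ω) hε)
  unfold lambdaLow at hlt
  obtain ⟨_, ⟨u, hu1, hu2, hu3, hu4, rfl⟩, hlt⟩ :=
    exists_lt_of_csInf_lt (by exact ⟨_, f, hf3, hf2, hf0, hf1, rfl⟩) hlt
  obtain ⟨R, hR, hsub⟩ := (hu2.isCompact.isBounded).subset_ball_lt r (0 : Euc d)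
  refine ⟨u, R, hR, hu1, hu2, hu3, fun y hy => ⟨(hu4 hy).1, ?_, ?_⟩, hlt⟩
  · simpa using (hu4 hy).2
  · simpa using hsub hy

/-- if `Σ(Ω) < ∞`, for every `k ≥ 1` there is a `k`-partition all of whose
cells satisfy `λ(ωᵢ) ≤ Σ(Ω)`; in particular `Λ_{k,∞}(Ω) ≤ Σ(Ω)`. -/
theorem statement_3 (d : ℕ) (hd : 2 ≤ d) (V : Euc d → ℝ)
    (hVmeas : Measurable V)
    (hVloc : ∀ K : Set (Euc d), IsCompact K → ∃ C : ℝ, ∀ x ∈ K, V x ≤ C)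
    (hVpos : ∀ x, 0 ≤ V x)
    (Ω : Set (Euc d)) (hΩ : IsOpen Ω) (hunb : ¬ Bornology.IsBounded Ω)
    (hbdd : BddAbove (specSet d V Ω)) :
    ∀ k : ℕ, 1 ≤ k →
      (∃ ω : Fin k → Set (Euc d), IsPartition d Ω ω ∧
          ∀ i, lambdaLow d V (ω i) ≤ SigmaR d V Ω) ∧
      LamInf d V Ω k ≤ SigmaR d V Ω := by
  intro k hk
  have hcells : ∃ ω : Fin k → Set (Euc d), IsPartition d Ω ω ∧
      ∀ i, lambdaLow d V (ω i) ≤ SigmaR d V Ω := by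
    have hstep (n : ℕ) := exists_test_beyond hΩ hunb hbdd (Nat.one_div_pos_of_nat (α := ℝ) (n := n))
    choose U R hR hsmooth hcpt hne hsupp hquot using hstep
    let r : ℕ → ℝ := fun n => Nat.rec 0 (fun n s => R n s) n
    have hr : StrictMono r := strictMono_nat_of_lt_succ fun n => hR n (r n)
    let A : ℕ → Set (Euc d) := fun n => Ω ∩ annulusO d (r n) (r (n + 1))
    let u : ℕ → Euc d → ℝ := fun n => U n (r n)
    have huA (n : ℕ) : tsupport (u n) ⊆ A n := hsupp n (r n)
    have hAopen (n : ℕ) : IsOpen (A n) :=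
      hΩ.inter ((isOpen_lt continuous_const continuous_norm).inter
        (isOpen_lt continuous_norm continuous_const))
    have hAne (n : ℕ) : (A n).Nonempty := by
      obtain ⟨x, hx⟩ := Function.ne_iff.mp (hne n (r n))
      exact ⟨x, huA n (subset_tsupport _ hx)⟩
    have hAlt {n m : ℕ} (hnm : n < m) : Disjoint (A n) (A m) := by
      rw [Set.disjoint_left]
      rintro x ⟨-, -, h1⟩ ⟨-, h2, -⟩
      exact absurd (h1.trans_le (hr.monotone hnm)) h2.not_gt
    have hAdisj {n m : ℕ} (hnm : n ≠ m) : Disjoint (A n) (A m) :=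
      hnm.lt_or_gt.elim hAlt fun h => (hAlt h).symm
    refine ⟨fun i => ⋃ m : ℕ, A (Nat.pair i m), ⟨fun i => isOpen_iUnion fun m => hAopen _,
      fun i => (hAne (Nat.pair i 0)).mono (subset_iUnion (fun m => A (Nat.pair i m)) 0),
      fun i => iUnion_subset fun m => inter_subset_left, fun i j hij => ?_⟩, fun i => ?_⟩
    · simp only [disjoint_iUnion_left, disjoint_iUnion_right]
      exact fun m n => hAdisj fun h => hij (Fin.ext (Nat.pair_eq_pair.mp h).1)
    · refine le_of_forall_pos_lt_add fun ε hε => ?_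
      obtain ⟨m, hm⟩ := exists_nat_one_div_lt hε
      calc lambdaLow d V (⋃ m : ℕ, A (Nat.pair i m))
          ≤ RayleighQ d V (u (Nat.pair i m)) :=
            lambdaLow_le hVpos (hsmooth _ _) (hcpt _ _) (hne _ _)
              ((huA _).trans (subset_iUnion (fun m => A (Nat.pair i m)) m))
        _ < SigmaR d V Ω + 1 / ((Nat.pair i m : ℕ) + 1) := hquot _ _
        _ ≤ SigmaR d V Ω + 1 / ((m : ℝ) + 1) := by
            gcongr
            exact Nat.right_le_pair _ _
        _ < SigmaR d V Ω + ε := by gcongr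
  refine ⟨hcells, ?_⟩
  obtain ⟨ω, hω, hle⟩ := hcells
  have : Nonempty (Fin k) := ⟨⟨0, hk⟩⟩
  unfold LamInf
  refine le_trans (csInf_le ⟨0, ?_⟩ ⟨ω, hω, rfl⟩) (ciSup_le hle)
  rintro _ ⟨ω', -, rfl⟩
  exact Real.iSup_nonneg fun i => lambdaLow_nonneg hVpos (ω' i)
end
end

section
/- Let Ω ⊆ ℝ^d be an unbounded open set with Σ(Ω) < ∞ and suppose λ(Ω) < Σ(Ω). Then for every k ≥ 1 and every 1 ≤ p < ∞ one has the strict inequality Λ_{k,p}(Ω) < k^{1/p}·Σ(Ω). -/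
/-!
The values `λ(Ω) < Σ(Ω)` and `λ(Ω \ K) ≤ Σ(Ω)` (for compact `K`) are both infima over compactly
supported test functions, so each can be approached inside a bounded piece of `Ω`.  First a ball
cuts out a piece of `Ω` whose `λ` is below some `b < Σ(Ω)`.  Outside any ball, `Ω` has a bounded
annular piece whose `λ` is below any prescribed `a > Σ(Ω)` (`exists_annulus`).  Iterating gives `k`
pieces of `Ω` in successive disjoint annuli, so `Λ_{k,p}(Ω)^p ≤ b^p + (k-1) a^p`, and this is
`< k Σ(Ω)^p` once `a` is close enough to `Σ(Ω)`.
-/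

open MeasureTheory Metric Set Filter
open scoped ENNReal Topology

noncomputable section

/-- Nonemptiness of `ω` matters: it provides a bump function, so that the infimum defining
`λ(ω)` is not the junk value `sInf ∅ = 0`. -/
lemma exists_test_of_lambdaLow_lt {d : ℕ} {V : Euc d → ℝ} {ω : Set (Euc d)} (ho : IsOpen ω)
    (hne : ω.Nonempty) {a : ℝ} (h : lambdaLow d V ω < a) :
    ∃ u : Euc d → ℝ, ContDiff ℝ (⊤ : ℕ∞) u ∧ HasCompactSupport u ∧ u ≠ 0 ∧
      tsupport u ⊆ ω ∧ RayleighQ d V u < a := by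
  obtain ⟨x, hx⟩ := hne
  obtain ⟨f, hf1, hf2, hf3, -, hf5⟩ :=
    exists_contDiff_tsupport_subset (n := (⊤ : ℕ∞)) (ho.mem_nhds hx)
  have hf0 : f ≠ 0 := by
    rintro rfl
    simp at hf5
  obtain ⟨r, ⟨u, h1, h2, h3, h4, rfl⟩, hr⟩ :=
    exists_lt_of_csInf_lt (by exact ⟨_, f, hf3, hf2, hf0, hf1, rfl⟩) h
  exact ⟨u, h1, h2, h3, h4, hr⟩

/-- A test function in `Ω` outside the ball of radius `R` is supported in a bounded annular piece
of `Ω`.  For `R < 0` the removed ball is empty. -/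
lemma exists_annulus {d : ℕ} {V : Euc d → ℝ} (hV : ∀ x, 0 ≤ V x) {Ω : Set (Euc d)}
    (hΩ : IsOpen Ω) (hunb : ¬ Bornology.IsBounded Ω) {R a : ℝ}
    (h : lambdaLow d V (Ω \ closedBall 0 R) < a) :
    ∃ R', R < R' ∧ (Ω ∩ annulusO d R R').Nonempty ∧ lambdaLow d V (Ω ∩ annulusO d R R') < a := by
  have hne : (Ω \ closedBall (0 : Euc d) R).Nonempty := by
    by_contra hcon
    rw [Set.not_nonempty_iff_eq_empty, Set.sdiff_eq_empty] at hcon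
    exact hunb (isBounded_closedBall.subset hcon)
  obtain ⟨u, h1, h2, h3, h4, h5⟩ :=
    exists_test_of_lambdaLow_lt (hΩ.sdiff isClosed_closedBall) hne h
  obtain ⟨R', hR'⟩ := h2.isCompact.isBounded.subset_ball (0 : Euc d)
  have hsub : tsupport u ⊆ Ω ∩ annulusO d R R' := by
    intro x hx
    have hx1 := h4 hx
    have hx2 := hR' hx
    simp only [Set.mem_sdiff, mem_closedBall_zero_iff, not_le] at hx1
    exact ⟨hx1.1, hx1.2, mem_ball_zero_iff.1 hx2⟩
  obtain ⟨x, hx⟩ := Function.ne_iff.1 h3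
  have hx' := hsub (subset_tsupport u hx)
  exact ⟨R', hx'.2.1.trans hx'.2.2, ⟨x, hx'⟩, (lambdaLow_le hV h1 h2 h3 hsub).trans_lt h5⟩

lemma isOpen_annulusO (d : ℕ) (r R : ℝ) : IsOpen (annulusO d r R) :=
  (isOpen_lt continuous_const continuous_norm).inter (isOpen_lt continuous_norm continuous_const)

/-- if `λ(Ω) < Σ(Ω) < ∞` then `Λ_{k,p}(Ω) < k^(1/p)·Σ(Ω)` strictly. -/
theorem statement_6 (d : ℕ) (hd : 2 ≤ d) (V : Euc d → ℝ)
    (hVmeas : Measurable V)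
    (hVloc : ∀ K : Set (Euc d), IsCompact K → ∃ C : ℝ, ∀ x ∈ K, V x ≤ C)
    (hVpos : ∀ x, 0 ≤ V x)
    (Ω : Set (Euc d)) (hΩ : IsOpen Ω) (hunb : ¬ Bornology.IsBounded Ω)
    (hbdd : BddAbove (specSet d V Ω))
    (hlt : lambdaLow d V Ω < SigmaR d V Ω) :
    ∀ k : ℕ, 1 ≤ k → ∀ p : ℝ, 1 ≤ p →
      LamP d V Ω k p < (k : ℝ) ^ (1 / p) * SigmaR d V Ω := by
  intro k hk p hp
  obtain ⟨m, rfl⟩ : ∃ m, k = m + 1 := ⟨k - 1, by omega⟩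
  have hp0 : 0 < p := by linarith
  set S := SigmaR d V Ω with hS
  have hΩ0 := lambdaLow_nonneg hVpos Ω
  have hS0 : 0 < S := hΩ0.trans_lt hlt
  obtain ⟨b, hb1, hb2⟩ := exists_between hlt
  have hb0 : 0 ≤ b := hΩ0.trans hb1.le
  have hbp : b ^ p < S ^ p := Real.rpow_lt_rpow hb0 hb2 hp0
  -- The room left by `b < Σ(Ω)` absorbs the excess of `a` over `Σ(Ω)` in the other `m` terms.
  obtain ⟨a, ha, haS⟩ : ∃ a, b ^ p + m * a ^ p < (m + 1) * S ^ p ∧ S < a := by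
    have hc : ContinuousAt (fun a : ℝ => b ^ p + m * a ^ p) S :=
      continuousAt_const.add
        (continuousAt_const.mul (Real.continuousAt_rpow_const _ _ (Or.inr hp0.le)))
    have hev : ∀ᶠ a in 𝓝 S, b ^ p + m * a ^ p < (m + 1) * S ^ p :=
      hc.eventually_lt continuousAt_const (by linarith)
    exact ((hev.filter_mono nhdsWithin_le_nhds).and (self_mem_nhdsWithin (s := Ioi S))).exists
  have hout : ∀ R : ℝ, lambdaLow d V (Ω \ closedBall 0 R) < a := fun R =>
    (le_csSup hbdd ⟨_, isCompact_closedBall 0 R, rfl⟩).trans_lt haS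
  -- Inner radius `-1` removes nothing, so the first piece is `Ω` intersected with a full ball.
  obtain ⟨R₀, hR₀, hne₀, hlam₀⟩ := exists_annulus (R := -1) (a := b) hVpos hΩ hunb (by
    rw [closedBall_eq_empty.2 (by norm_num), Set.sdiff_empty]
    exact hb1)
  choose f hf hne hlam using fun R => exists_annulus hVpos hΩ hunb (hout R)
  -- `T` lists the radii `-1, R₀, f R₀, f (f R₀), …` bounding the successive annuli.
  let T : ℕ → ℝ := fun n => Nat.casesOn n (-1) fun j => f^[j] R₀
  have hTsucc : ∀ n, T (n + 1 + 1) = f (T (n + 1)) := fun n => Function.iterate_succ_apply' f n R₀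
  have hTmono : StrictMono T := by
    refine strictMono_nat_of_lt_succ fun n => ?_
    cases n with
    | zero => exact hR₀
    | succ n => rw [hTsucc]; exact hf _
  let ω : Fin (m + 1) → Set (Euc d) := fun i => Ω ∩ annulusO d (T i) (T (i + 1))
  have hdisj : ∀ i j : Fin (m + 1), i < j → Disjoint (ω i) (ω j) := by
    intro i j hij
    refine Set.disjoint_left.2 fun x hxi hxj => ?_
    have h1 : T ((i : ℕ) + 1) ≤ T j := hTmono.monotone (Nat.succ_le_of_lt hij)
    have h2 := hxi.2.2
    have h3 := hxj.2.1
    linarith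
  have hpart : IsPartition d Ω ω := by
    refine ⟨fun i => hΩ.inter (isOpen_annulusO _ _ _), fun i => ?_, fun i => inter_subset_left,
      fun i j hij => ?_⟩
    · refine Fin.cases hne₀ (fun j => ?_) i
      simp only [ω, Fin.val_succ, hTsucc]
      exact hne _
    · rcases lt_or_gt_of_ne hij with h | h
      · exact hdisj i j h
      · exact (hdisj j i h).symm
  have hsum0 : 0 ≤ ∑ i, lambdaLow d V (ω i) ^ p :=
    Finset.sum_nonneg fun i _ => Real.rpow_nonneg (lambdaLow_nonneg hVpos _) _
  have hsum : ∑ i, lambdaLow d V (ω i) ^ p < (m + 1) * S ^ p := by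
    refine lt_of_le_of_lt ?_ ha
    rw [Fin.sum_univ_succ]
    refine add_le_add (Real.rpow_le_rpow (lambdaLow_nonneg hVpos _) hlam₀.le hp0.le) ?_
    have hterm : ∀ j : Fin m, lambdaLow d V (ω j.succ) ^ p ≤ a ^ p := by
      intro j
      refine Real.rpow_le_rpow (lambdaLow_nonneg hVpos _) ?_ hp0.le
      simp only [ω, Fin.val_succ, hTsucc]
      exact (hlam _).le
    simpa using Finset.sum_le_sum fun j (_ : j ∈ Finset.univ) => hterm j
  have hle : LamP d V Ω (m + 1) p ≤ (∑ i, lambdaLow d V (ω i) ^ p) ^ (1 / p) := by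
    refine csInf_le ⟨0, ?_⟩ ⟨ω, hpart, rfl⟩
    rintro r ⟨ω', -, rfl⟩
    exact Real.rpow_nonneg
      (Finset.sum_nonneg fun i _ => Real.rpow_nonneg (lambdaLow_nonneg hVpos _) _) _
  refine hle.trans_lt ((Real.rpow_lt_rpow hsum0 hsum (by positivity)).trans_eq ?_)
  rw [Real.mul_rpow (by positivity) (by positivity), ← Real.rpow_mul hS0.le,
    mul_one_div_cancel hp0.ne', Real.rpow_one]
  push_cast
  rfl
end
end

section
/- Let Ω ⊆ ℝ^d be an unbounded open set with Σ(Ω) < ∞, let k ≥ 1 and 1 ≤ p < ∞, and suppose the strict threshold inequality Λ_{k,p}(Ω) < T_{k,p}(Ω) holds, i.e. Λ_{k,p}(Ω)^p < Λ_{k−1,p}(Ω)^p + Σ(Ω)^p. If (ω₁,…,ω_k) is a k-partition of Ω attaining Λ_{k,p}(Ω), that is (∑_{i=1}^k λ(ωᵢ)^p)^{1/p} = Λ_{k,p}(Ω), then λ(ωᵢ) < Σ(Ω) for every i = 1,…,k. The same conclusion holds for p = ∞: if max_i λ(ωᵢ) = Λ_{k,∞}(Ω) < Σ(Ω), then λ(ωᵢ)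 < Σ(Ω) for every i. -/
/-!
If some cell `ωᵢ` of a minimizing `k`-partition had `λ(ωᵢ) ≥ Σ(Ω)`, discarding it would leave a
`(k-1)`-partition of `Ω`, so the remaining cells contribute at least `Λ_{k-1,p}(Ω)^p` to the energy
and `Λ_{k,p}(Ω)^p ≥ Λ_{k-1,p}(Ω)^p + Σ(Ω)^p`, against the strict threshold inequality. The only
analytic input is `λ ≥ 0` (hence `Σ ≥ 0`), which follows from `V ≥ 0` and makes `t ↦ t^p` monotone on
the relevant values. For `p = ∞` each `λ(ωᵢ)` is at most the maximum, which is below `Σ(Ω)`.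
-/

open MeasureTheory Metric Set Filter
open scoped ENNReal Topology

noncomputable section

lemma SigmaR_nonneg {d : ℕ} {V : Euc d → ℝ} (hV : ∀ x, 0 ≤ V x) (Ω : Set (Euc d)) :
    0 ≤ SigmaR d V Ω := by
  refine Real.sSup_nonneg ?_
  rintro _ ⟨K, -, rfl⟩
  exact lambdaLow_nonneg hV _

lemma sum_lambdaLow_rpow_nonneg {d : ℕ} {V : Euc d → ℝ} (hV : ∀ x, 0 ≤ V x) {k : ℕ}
    (ω : Fin k → Set (Euc d)) (p : ℝ) : 0 ≤ ∑ i, lambdaLow d V (ω i) ^ p :=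
  Finset.sum_nonneg fun _ _ => Real.rpow_nonneg (lambdaLow_nonneg hV _) _

/-- Every `k`-partition is a competitor for `Λ_{k,p}`, stated at the level of `p`-th powers.
The case `k = 0` is included: the empty partition has energy `0`. -/
lemma LamP_rpow_le_sum {d : ℕ} {V : Euc d → ℝ} (hV : ∀ x, 0 ≤ V x) {Ω : Set (Euc d)} {k : ℕ}
    {p : ℝ} (hp : 1 ≤ p) {ω : Fin k → Set (Euc d)} (hω : IsPartition d Ω ω) :
    LamP d V Ω k p ^ p ≤ ∑ i, lambdaLow d V (ω i) ^ p := by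
  have hnn : ∀ r ∈ {r : ℝ | ∃ ω : Fin k → Set (Euc d), IsPartition d Ω ω ∧
      r = (∑ i, lambdaLow d V (ω i) ^ p) ^ (1 / p)}, 0 ≤ r := by
    rintro _ ⟨ω', -, rfl⟩
    exact Real.rpow_nonneg (sum_lambdaLow_rpow_nonneg hV ω' p) _
  have hle : LamP d V Ω k p ≤ (∑ i, lambdaLow d V (ω i) ^ p) ^ (1 / p) :=
    csInf_le ⟨0, hnn⟩ ⟨ω, hω, rfl⟩
  have h0 : 0 ≤ LamP d V Ω k p := Real.sInf_nonneg hnn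
  calc LamP d V Ω k p ^ p
      ≤ ((∑ i, lambdaLow d V (ω i) ^ p) ^ (1 / p)) ^ p :=
        Real.rpow_le_rpow h0 hle (by linarith)
    _ = ∑ i, lambdaLow d V (ω i) ^ p := by
        rw [one_div, Real.rpow_inv_rpow (sum_lambdaLow_rpow_nonneg hV ω p) (by linarith)]

lemma IsPartition.removeCell {d : ℕ} {Ω : Set (Euc d)} {n : ℕ} {ω : Fin (n + 1) → Set (Euc d)}
    (hω : IsPartition d Ω ω) (i : Fin (n + 1)) :
    IsPartition d Ω fun j => ω (i.succAbove j) := by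
  obtain ⟨ho, hne, hsub, hdisj⟩ := hω
  exact ⟨fun _ => ho _, fun _ => hne _, fun _ => hsub _,
    fun a b hab => hdisj _ _ fun h => hab (Fin.succAbove_right_injective h)⟩

/-- under the strict threshold inequality, every cell of a minimizing
`k`-partition satisfies `λ(ωᵢ) < Σ(Ω)`; both for `1 ≤ p < ∞` and for `p = ∞`. -/
theorem statement_11 (d : ℕ) (hd : 2 ≤ d) (V : Euc d → ℝ)
    (hVmeas : Measurable V)
    (hVloc : ∀ K : Set (Euc d), IsCompact K → ∃ C : ℝ, ∀ x ∈ K, V x ≤ C)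
    (hVpos : ∀ x, 0 ≤ V x)
    (Ω : Set (Euc d)) (hΩ : IsOpen Ω) (hunb : ¬ Bornology.IsBounded Ω)
    (hbdd : BddAbove (specSet d V Ω))
    (k : ℕ) (hk : 1 ≤ k) :
    (∀ p : ℝ, 1 ≤ p →
        LamP d V Ω k p ^ p < LamP d V Ω (k - 1) p ^ p + SigmaR d V Ω ^ p →
        ∀ ω : Fin k → Set (Euc d), IsPartition d Ω ω →
          (∑ i, lambdaLow d V (ω i) ^ p) ^ (1 / p) = LamP d V Ω k p →
          ∀ i, lambdaLow d V (ω i) < SigmaR d V Ω) ∧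
    (LamInf d V Ω k < SigmaR d V Ω →
        ∀ ω : Fin k → Set (Euc d), IsPartition d Ω ω →
          (⨆ i, lambdaLow d V (ω i)) = LamInf d V Ω k →
          ∀ i, lambdaLow d V (ω i) < SigmaR d V Ω) := by
  refine ⟨fun p hp hlt ω hω hmin i => ?_, fun hlt ω _ hmin i => ?_⟩
  · obtain ⟨n, rfl⟩ : ∃ n, k = n + 1 := ⟨k - 1, by omega⟩
    by_contra! hge
    have hrest := LamP_rpow_le_sum hVpos hp (hω.removeCell i)
    have hi : SigmaR d V Ω ^ p ≤ lambdaLow d V (ω i) ^ p :=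
      Real.rpow_le_rpow (SigmaR_nonneg hVpos Ω) hge (by linarith)
    rw [← hmin, one_div, Real.rpow_inv_rpow (sum_lambdaLow_rpow_nonneg hVpos ω p) (by linarith),
      Fin.sum_univ_succAbove _ i, Nat.add_sub_cancel] at hlt
    linarith
  · exact ((le_ciSup (Set.finite_range fun j => lambdaLow d V (ω j)).bddAbove i).trans
      hmin.le).trans_lt hlt
end
end

section
/- Let d = 2, V ≡ 0, and Ω = (1,∞) × (0,π) ⊂ ℝ². Then λ(ω) ≥ 1 for every nonempty open subset ω ⊆ Ω, and for every k ≥ 1 there exist pairwise disjoint nonempty connected open sets ω₁,…,ω_k ⊆ Ω with λ(ωᵢ) = 1 for every i. Consequently, Λ_{k,∞}(Ω) = 1 and Λ_{k,p}(Ω) = k^{1/p} for every 1 ≤ p < ∞, and in each case the infimum is attained by a k-partition whose cells are connected. -/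
/-!
The lower bound `λ(ω) ≥ 1` is the Dirichlet–Poincaré inequality on `(0,π)`, obtained from the
ground state `sin`: for `u` supported in the strip and `v = cot(y) u`,
`(∂_y u)² - u² = (∂_y u - v)² + ∂_y (u v)`, and the divergence term integrates to zero
(`poincare_strip`).

For the cells, the half-strip is cut by `k + 1` graphs `y = π/2 + arctan (x (i - c(x)))`,
`i = 0, …, k`, where `c(x) = k (1 + sin √x) / 2` sweeps `[0, k]` more and more slowly as
`x → ∞`. The `i`-th cell is the region between the `i`-th and the `(i+1)`-st graph; it is open and
connected, and distinct cells are disjoint. On long intervals far out where `c(x)` stays close to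
`i + 1/2`, the walls `0, …, i` lie near `y = 0` and the walls `i + 1, …, k` near `y = π`, so the
`i`-th cell contains rectangles `[a - L, a + L] × [δ, π - δ]` with `L` arbitrarily large and `δ`
arbitrarily small (`exists_rect_subset_cell`). Test functions `φ(x) ψ(y)` on such rectangles, with
`φ` a stretched bump and `ψ` a truncation of `sin`, have Rayleigh quotients tending to `1`
(`lambdaLow_le_one`). Hence every cell has `λ = 1`, and the values of `Λ_{k,p}` and `Λ_{k,∞}`
follow by monotonicity.
-/

open MeasureTheory Metric Set Filter
open scoped ENNReal Topology

noncomputable section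

/-- The half-strip `(1,∞) × (0,π) ⊂ ℝ²`. -/
def halfStrip : Set (Euc 2) :=
  { x : Euc 2 | 1 < x 0 ∧ 0 < x 1 ∧ x 1 < Real.pi }

/-! ### The lower bound -/

lemma rayleigh_eq (u : Euc 2 → ℝ) :
    RayleighQ 2 (fun _ => 0) u = (∫ x, ‖fderiv ℝ u x‖ ^ 2) / ∫ x, u x ^ 2 := by
  simp [RayleighQ, gradient]

/-- The Poincaré inequality with optimal constant `1` for test functions on `ℝ × (0,π)`. -/
lemma poincare_strip {u : Euc 2 → ℝ} (hu : ContDiff ℝ (⊤ : ℕ∞) u) (hc : HasCompactSupport u)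
    (hs : tsupport u ⊆ {x | 0 < x 1 ∧ x 1 < Real.pi}) :
    ∫ x, u x ^ 2 ≤ ∫ x, ‖fderiv ℝ u x‖ ^ 2 := by
  set e : Euc 2 := EuclideanSpace.single 1 1 with he
  set v : Euc 2 → ℝ := fun x => Real.cos (x 1) / Real.sin (x 1) * u x with hv
  have hts : tsupport v ⊆ tsupport u := closure_mono (by
    intro x hx; simp only [hv, Function.mem_support] at hx ⊢
    exact right_ne_zero_of_mul hx)
  have hsin : ∀ x ∈ tsupport u, Real.sin (x 1) ≠ 0 := fun _ hx =>
    (Real.sin_pos_of_pos_of_lt_pi (hs hx).1 (hs hx).2).ne'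
  have hvs : ContDiff ℝ (⊤ : ℕ∞) v := by
    refine contDiff_iff_contDiffAt.2 fun x => ?_
    by_cases hx : x ∈ tsupport u
    · exact ContDiffAt.mul (ContDiffAt.div (by fun_prop) (by fun_prop) (hsin x hx))
        hu.contDiffAt
    · exact contDiffAt_const.congr_of_eventuallyEq
        (notMem_tsupport_iff_eventuallyEq.1 fun h => hx (hts h))
  have hvc : HasCompactSupport v := hc.mono' (subset_closure.trans hts)
  have hdu : Differentiable ℝ u := hu.differentiable (by simp)
  have hdv : Differentiable ℝ v := hvs.differentiable (by simp)
  have hfu : Continuous (fderiv ℝ u) := hu.continuous_fderiv (by simp)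
  have hfv : Continuous (fderiv ℝ v) := hvs.continuous_fderiv (by simp)
  have hfu' : Continuous fun x => fderiv ℝ u x e := by fun_prop
  have hfv' : Continuous fun x => fderiv ℝ v x e := by fun_prop
  have huc := hu.continuous
  have hvc' := hvs.continuous
  have hi : ∀ f : Euc 2 → ℝ, Continuous f → (∀ x, x ∉ tsupport u → f x = 0) → Integrable f :=
    fun f hf h0 => hf.integrable_of_hasCompactSupport (HasCompactSupport.intro hc h0)
  have zu : ∀ x, x ∉ tsupport u → u x = 0 := fun x hx => image_eq_zero_of_notMem_tsupport hx
  have zv : ∀ x, x ∉ tsupport u → v x = 0 := fun x hx => by simp [hv, zu x hx]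
  have zfu : ∀ x, x ∉ tsupport u → fderiv ℝ u x = 0 := fun _ hx =>
    fderiv_of_notMem_tsupport ℝ hx
  have zfv : ∀ x, x ∉ tsupport u → fderiv ℝ v x = 0 := fun _ hx =>
    fderiv_of_notMem_tsupport ℝ fun h => hx (hts h)
  have i1 : Integrable fun x => fderiv ℝ u x e * v x :=
    hi _ (by fun_prop) fun x hx => by simp [zv x hx]
  have i2 : Integrable fun x => u x * fderiv ℝ v x e :=
    hi _ (by fun_prop) fun x hx => by simp [zu x hx]
  have ibp : ∫ x, u x * fderiv ℝ v x e = - ∫ x, fderiv ℝ u x e * v x :=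
    integral_mul_fderiv_eq_neg_fderiv_mul_of_integrable i1 i2
      (hi _ (by fun_prop) fun x hx => by simp [zu x hx])
      (fun x _ => hdu x) (fun x _ => hdv x)
  -- Leibniz rule for `v = cot u`, using `cot' = -1 - cot²`.
  have key : ∀ x, fderiv ℝ v x e * u x = fderiv ℝ u x e * v x - u x ^ 2 - v x ^ 2 := by
    intro x
    by_cases hx : x ∈ tsupport u
    · have hs0 := hsin x hx
      have hp : HasFDerivAt (fun x : Euc 2 => x 1) (EuclideanSpace.proj (𝕜 := ℝ) (1 : Fin 2)) x :=
        (EuclideanSpace.proj (1 : Fin 2) : Euc 2 →L[ℝ] ℝ).hasFDerivAt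
      have hc := ((Real.hasDerivAt_cos (x 1)).div (Real.hasDerivAt_sin (x 1)) hs0).comp_hasFDerivAt
        x hp
      have := (hc.mul (hdu x).hasFDerivAt).fderiv
      have h2 : fderiv ℝ v x = _ := this
      rw [h2]
      simp [he, hv]
      field_simp
      ring
    · simp [zu x hx, zv x hx]
  have i3 : Integrable fun x => ‖fderiv ℝ u x‖ ^ 2 :=
    hi _ (by fun_prop) fun x hx => by simp [zfu x hx]
  have i4 : Integrable fun x => u x ^ 2 :=
    hi _ (by fun_prop) fun x hx => by simp [zu x hx]
  have hsum : ∫ x, (u x * fderiv ℝ v x e + fderiv ℝ u x e * v x) = 0 := by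
    rw [integral_add i2 i1, ibp]; ring
  have : 0 ≤ ∫ x, (‖fderiv ℝ u x‖ ^ 2 - u x ^ 2
      - (u x * fderiv ℝ v x e + fderiv ℝ u x e * v x)) := by
    refine integral_nonneg fun x => ?_
    have hn : |fderiv ℝ u x e| ≤ ‖fderiv ℝ u x‖ := by
      have := (fderiv ℝ u x).le_opNorm e
      simpa [he] using this
    have h2 := sq_le_sq' (by linarith [neg_abs_le (fderiv ℝ u x e), abs_nonneg (fderiv ℝ u x e)])
      ((le_abs_self _).trans hn)
    have := key x
    simp only [Pi.zero_apply]
    nlinarith [sq_nonneg (fderiv ℝ u x e - v x)]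
  rw [integral_sub (f := fun x => ‖fderiv ℝ u x‖ ^ 2 - u x ^ 2)
    (g := fun x => u x * fderiv ℝ v x e + fderiv ℝ u x e * v x) (i3.sub i4) (i2.add i1), hsum, integral_sub i3 i4] at this
  linarith

lemma one_le_rayleigh {u : Euc 2 → ℝ} (hu : ContDiff ℝ (⊤ : ℕ∞) u) (hc : HasCompactSupport u)
    (h0 : u ≠ 0) (hs : tsupport u ⊆ halfStrip) : 1 ≤ RayleighQ 2 (fun _ => 0) u := by
  obtain ⟨x, hx⟩ := Function.ne_iff.1 h0
  have hpos : 0 < ∫ x, u x ^ 2 :=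
    Continuous.integral_pos_of_hasCompactSupport_nonneg_nonzero (x := x)
      (hu.continuous.pow 2) (hc.comp_left (g := fun t : ℝ => t ^ 2) (by simp))
      (fun y => sq_nonneg _) (by simpa using hx)
  rw [rayleigh_eq, one_le_div hpos]
  exact poincare_strip hu hc fun x hx => (hs hx).2

lemma one_le_lambdaLow {ω : Set (Euc 2)} (ho : IsOpen ω) (hne : ω.Nonempty)
    (hs : ω ⊆ halfStrip) : 1 ≤ lambdaLow 2 (fun _ => 0) ω := by
  refine le_csInf ?_ ?_
  · obtain ⟨x, hx⟩ := hne
    obtain ⟨f, h1, h2, h3, -, h5⟩ := exists_contDiff_tsupport_subset (n := ⊤) (ho.mem_nhds hx)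
    exact ⟨_, f, h3, h2, fun h => by simp [h] at h5, h1, rfl⟩
  · rintro r ⟨u, h1, h2, h3, h4, rfl⟩
    exact one_le_rayleigh h1 h2 h3 (h4.trans hs)

/-! ### One-dimensional test functions -/

/-- A smooth approximation of the positive part: `ramp δ` vanishes on `(-∞, δ]`, has derivative
in `[0, 1]`, and has derivative `1` on `[2δ, ∞)`. -/
def ramp (δ s : ℝ) : ℝ := ∫ t in (0 : ℝ)..s, Real.smoothTransition (t / δ - 1)

lemma continuous_ramp_integrand (δ : ℝ) :
    Continuous fun t : ℝ => Real.smoothTransition (t / δ - 1) :=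
  Real.smoothTransition.continuous.comp (by fun_prop)

lemma hasDerivAt_ramp (δ s : ℝ) :
    HasDerivAt (ramp δ) (Real.smoothTransition (s / δ - 1)) s :=
  (continuous_ramp_integrand δ).integral_hasStrictDerivAt 0 s |>.hasDerivAt

lemma contDiff_ramp (δ : ℝ) : ContDiff ℝ (⊤ : ℕ∞) (ramp δ) := by
  refine contDiff_infty_iff_deriv.2 ⟨fun s => (hasDerivAt_ramp δ s).differentiableAt, ?_⟩
  rw [show deriv (ramp δ) = fun s => Real.smoothTransition (s / δ - 1) from
    funext fun s => (hasDerivAt_ramp δ s).deriv]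
  exact Real.smoothTransition.contDiff.comp (by fun_prop)

lemma ramp_eq_zero {δ s : ℝ} (hδ : 0 < δ) (hs : s ≤ δ) : ramp δ s = 0 := by
  refine intervalIntegral.integral_zero_ae (ae_of_all _ fun t ht => ?_)
  refine Real.smoothTransition.zero_of_nonpos ?_
  have : t ≤ δ := ht.2.trans (max_le hδ.le hs)
  rw [sub_nonpos, div_le_one hδ]; exact this

lemma sub_le_ramp {δ s : ℝ} (hδ : 0 < δ) (hs : 0 ≤ s) : s - 2 * δ ≤ ramp δ s := by
  have hi : ∀ a b, IntervalIntegrable (fun t => Real.smoothTransition (t / δ - 1)) volume a b :=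
    fun a b => (continuous_ramp_integrand δ).intervalIntegrable a b
  rcases le_total s (2 * δ) with h | h
  · exact (sub_nonpos.2 h).trans
      (intervalIntegral.integral_nonneg hs fun t _ => Real.smoothTransition.nonneg _)
  · have h1 : 0 ≤ ∫ t in (0 : ℝ)..(2 * δ), Real.smoothTransition (t / δ - 1) :=
      intervalIntegral.integral_nonneg (by positivity) fun t _ => Real.smoothTransition.nonneg _
    have h2 : ∫ t in (2 * δ)..s, Real.smoothTransition (t / δ - 1) = s - 2 * δ := by
      rw [intervalIntegral.integral_congr (g := fun _ => (1 : ℝ))]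
      · simp
      · intro t ht
        rw [uIcc_of_le h] at ht
        refine Real.smoothTransition.one_of_one_le ?_
        rw [le_sub_iff_add_le, le_div_iff₀ hδ]
        linarith [ht.1]
    unfold ramp
    rw [← intervalIntegral.integral_add_adjacent_intervals (hi 0 (2 * δ)) (hi _ s), h2]
    linarith

/-- The sine on `(0,π)` truncated to a smooth function with compact support in `(0,π)`, extended
by zero. -/
def profile (δ : ℝ) : ℝ → ℝ := (Ioo 0 Real.pi).indicator fun y => ramp δ (Real.sin y)

lemma profile_eq_zero {δ y : ℝ} (hδ : 0 < δ) (hy : y < δ ∨ Real.pi - δ < y) :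
    profile δ y = 0 := by
  refine indicator_apply_eq_zero.2 fun h => ramp_eq_zero hδ ?_
  rcases hy with hy | hy
  · exact (Real.sin_lt h.1).le.trans hy.le
  · rw [← Real.sin_pi_sub]
    exact (Real.sin_lt (by linarith [h.2])).le.trans (by linarith)

lemma profile_eventuallyEq_zero {δ y : ℝ} (hδ : 0 < δ) (hy : y < δ ∨ Real.pi - δ < y) :
    profile δ =ᶠ[𝓝 y] fun _ => 0 := by
  rcases hy with hy | hy
  · filter_upwards [Iio_mem_nhds hy] with z hz using profile_eq_zero hδ (Or.inl hz)
  · filter_upwards [Ioi_mem_nhds hy] with z hz using profile_eq_zero hδ (Or.inr hz)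

lemma profile_eventuallyEq_ramp {δ y : ℝ} (hy : y ∈ Ioo 0 Real.pi) :
    profile δ =ᶠ[𝓝 y] fun y => ramp δ (Real.sin y) := by
  filter_upwards [isOpen_Ioo.mem_nhds hy] with z hz using indicator_of_mem hz _

lemma contDiff_profile {δ : ℝ} (hδ : 0 < δ) : ContDiff ℝ (⊤ : ℕ∞) (profile δ) := by
  refine contDiff_iff_contDiffAt.2 fun y => ?_
  by_cases hy : y ∈ Ioo 0 Real.pi
  · exact ((contDiff_ramp δ).comp Real.contDiff_sin).contDiffAt.congr_of_eventuallyEq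
      (profile_eventuallyEq_ramp hy)
  · refine contDiffAt_const.congr_of_eventuallyEq (profile_eventuallyEq_zero hδ ?_)
    by_contra! h
    exact hy ⟨by linarith, by linarith⟩

lemma tsupport_profile {δ : ℝ} (hδ : 0 < δ) : tsupport (profile δ) ⊆ Icc δ (Real.pi - δ) := by
  refine closure_minimal (fun y hy => ?_) isClosed_Icc
  by_contra h
  refine hy (profile_eq_zero hδ ?_)
  by_contra! h'
  exact h h'

lemma integral_deriv_profile_sq_le {δ : ℝ} (hδ : 0 < δ) :
    ∫ y, deriv (profile δ) y ^ 2 ≤ Real.pi / 2 := by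
  have hcd := (contDiff_profile hδ).continuous_deriv (by simp)
  have h0 : ∀ y ∉ Ioc 0 Real.pi, deriv (profile δ) y ^ 2 = 0 := by
    intro y hy
    rw [(profile_eventuallyEq_zero hδ ?_).deriv_eq]
    · simp
    · by_contra! h
      exact hy ⟨by linarith, by linarith⟩
  rw [← setIntegral_eq_integral_of_forall_compl_eq_zero h0,
    ← intervalIntegral.integral_of_le Real.pi_pos.le]
  calc _ ≤ ∫ y in (0 : ℝ)..Real.pi, Real.cos y ^ 2 := by
        refine intervalIntegral.integral_mono_on_of_le_Ioo Real.pi_pos.le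
          ((hcd.pow 2).intervalIntegrable _ _)
          ((Real.continuous_cos.pow 2).intervalIntegrable _ _) fun y hy => ?_
        rw [(profile_eventuallyEq_ramp hy).deriv_eq,
          HasDerivAt.deriv (f := fun y => ramp δ (Real.sin y))
            ((hasDerivAt_ramp δ (Real.sin y)).comp y (Real.hasDerivAt_sin y)), mul_pow]
        refine mul_le_of_le_one_left (sq_nonneg _) (pow_le_one₀ ?_ ?_)
        · exact Real.smoothTransition.nonneg _
        · exact Real.smoothTransition.le_one _
    _ = Real.pi / 2 := by rw [integral_cos_sq]; simp

lemma le_integral_profile_sq {δ : ℝ} (hδ : 0 < δ) :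
    Real.pi / 2 - 8 * δ ≤ ∫ y, profile δ y ^ 2 := by
  have hc := (contDiff_profile hδ).continuous
  have h0 : ∀ y ∉ Ioc 0 Real.pi, profile δ y ^ 2 = 0 := by
    intro y hy
    rw [profile_eq_zero hδ ?_]
    · simp
    · by_contra! h
      exact hy ⟨by linarith, by linarith⟩
  rw [← setIntegral_eq_integral_of_forall_compl_eq_zero h0,
    ← intervalIntegral.integral_of_le Real.pi_pos.le]
  calc Real.pi / 2 - 8 * δ = ∫ y in (0 : ℝ)..Real.pi, (Real.sin y ^ 2 - 4 * δ * Real.sin y) := by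
        rw [intervalIntegral.integral_sub (Continuous.intervalIntegrable (by fun_prop) _ _)
          (Continuous.intervalIntegrable (by fun_prop) _ _),
          intervalIntegral.integral_const_mul, integral_sin_sq, integral_sin]
        simp; ring
    _ ≤ _ := by
        refine intervalIntegral.integral_mono_on_of_le_Ioo Real.pi_pos.le
          (Continuous.intervalIntegrable (by fun_prop) _ _)
          ((hc.pow 2).intervalIntegrable _ _) fun y hy => ?_
        have hs := Real.sin_pos_of_pos_of_lt_pi hy.1 hy.2
        have h1 := sub_le_ramp hδ hs.le
        rw [show profile δ y = ramp δ (Real.sin y) from indicator_of_mem hy _]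
        rcases le_total (Real.sin y) (2 * δ) with h | h
        · nlinarith [sq_nonneg (ramp δ (Real.sin y))]
        · nlinarith

/-- There are test functions on `(0,π)` whose one-dimensional Rayleigh quotient is at most
`1 + ε`. -/
lemma exists_transversal {ε : ℝ} (hε : 0 < ε) : ∃ δ > 0, ∃ ψ : ℝ → ℝ, ContDiff ℝ (⊤ : ℕ∞) ψ ∧
    tsupport ψ ⊆ Icc δ (Real.pi - δ) ∧ 0 < ∫ y, ψ y ^ 2 ∧
    ∫ y, deriv ψ y ^ 2 ≤ (1 + ε) * ∫ y, ψ y ^ 2 := by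
  have hδ : 0 < ε / (8 * (1 + ε)) := by positivity
  have h8 : 8 * (ε / (8 * (1 + ε))) * (1 + ε) = ε := by field_simp
  refine ⟨_, hδ, profile _, contDiff_profile hδ, tsupport_profile hδ, ?_, ?_⟩
  · have := le_integral_profile_sq hδ
    have := Real.pi_gt_three
    nlinarith
  · have := le_integral_profile_sq hδ
    have := integral_deriv_profile_sq_le hδ
    have := Real.pi_gt_three
    nlinarith

/-- On long enough intervals there are test functions with Rayleigh quotient at most `ε`,
obtained by stretching a fixed bump; the length does not depend on the position `a`. -/
lemma exists_longitudinal {ε : ℝ} (hε : 0 < ε) : ∃ L > 0, ∀ a : ℝ, ∃ φ : ℝ → ℝ,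
    ContDiff ℝ (⊤ : ℕ∞) φ ∧ tsupport φ ⊆ Icc (a - L) (a + L) ∧ 0 < ∫ x, φ x ^ 2 ∧
    ∫ x, deriv φ x ^ 2 ≤ ε * ∫ x, φ x ^ 2 := by
  obtain ⟨f, h1, h2, h3, -, h5⟩ :=
    exists_contDiff_tsupport_subset (n := ⊤) (Icc_mem_nhds (show (-1 : ℝ) < 0 by norm_num)
      (show (0 : ℝ) < 1 by norm_num))
  have hpos : 0 < ∫ x, f x ^ 2 :=
    Continuous.integral_pos_of_hasCompactSupport_nonneg_nonzero (x := 0)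
      (h3.continuous.pow 2) (h2.comp_left (g := fun t : ℝ => t ^ 2) (by simp))
      (fun y => sq_nonneg _) (by simp [h5])
  set B := ∫ x, deriv f x ^ 2 with hB
  have hB0 : 0 ≤ B := integral_nonneg fun _ => sq_nonneg _
  set A := ∫ x, f x ^ 2 with hA
  set L := B / (ε * A) + 1 with hL
  have hL1 : 1 ≤ L := by rw [hL]; have : 0 ≤ B / (ε * A) := by positivity
                         linarith
  have hL0 : 0 < L := by linarith
  have hBL : B ≤ ε * A * L := by
    have : B = ε * A * (B / (ε * A)) := by field_simp
    rw [hL]; nlinarith [mul_pos hε hpos]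
  refine ⟨L, hL0, fun a => ⟨fun x => f ((x - a) / L), by fun_prop, ?_, ?_, ?_⟩⟩
  · refine closure_minimal (fun x hx => ?_) isClosed_Icc
    have := h1 (subset_tsupport f hx)
    rw [mem_Icc, le_div_iff₀ hL0, div_le_iff₀ hL0] at this
    exact ⟨by linarith [this.1], by linarith [this.2]⟩
  all_goals
    have hI : ∀ g : ℝ → ℝ, ∫ x, g ((x - a) / L) = L * ∫ x, g x := fun g => by
      rw [integral_sub_right_eq_self (fun x => g (x / L)) a, Measure.integral_comp_div]
      simp [abs_of_pos hL0]
    have h := hI fun x => f x ^ 2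
    rw [h]
  · positivity
  · have hd : ∀ x, deriv (fun x => f ((x - a) / L)) x = deriv f ((x - a) / L) / L := fun x => by
      have h := (h3.differentiable (by simp) ((x - a) / L)).hasDerivAt.comp x
        (((hasDerivAt_id x).sub_const a).div_const L)
      have := h.deriv
      simp only [Function.comp_def, id] at this
      rw [this]; ring
    simp_rw [hd]
    rw [hI fun x => (deriv f x / L) ^ 2]
    simp_rw [div_pow, integral_div]
    rw [← hB, ← hA, show L * (B / L ^ 2) = B / L by field_simp, div_le_iff₀ hL0]
    nlinarith [mul_pos hε hpos, mul_pos (mul_pos hε hpos) hL0]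

/-! ### Product test functions and the upper bound -/

lemma integral_mul_euc (f g : ℝ → ℝ) :
    ∫ x : Euc 2, f (x 0) * g (x 1) = (∫ s, f s) * ∫ t, g t := by
  have h := integral_fin_nat_prod_volume_eq_prod (n := 2) (𝕜 := ℝ) (E := fun _ => ℝ) ![f, g]
  simp only [Fin.prod_univ_two, Matrix.cons_val_zero, Matrix.cons_val_one] at h
  rw [← h]
  exact (PiLp.volume_preserving_ofLp (Fin 2)).integral_comp
    (MeasurableEquiv.toLp 2 (Fin 2 → ℝ)).symm.measurableEmbedding
    (fun x : Fin 2 → ℝ => f (x 0) * g (x 1))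

lemma integrable_mul_euc {f g : ℝ → ℝ} (hf : Integrable f) (hg : Integrable g) :
    Integrable fun x : Euc 2 => f (x 0) * g (x 1) := by
  have h := Integrable.fintype_prod (ι := Fin 2) (𝕜 := ℝ) (E := ℝ)
    (μ := fun _ => volume) (f := ![f, g]) (by simp [Fin.forall_fin_two, hf, hg])
  simp only [Fin.prod_univ_two, Matrix.cons_val_zero, Matrix.cons_val_one] at h
  exact (PiLp.volume_preserving_ofLp (Fin 2)).integrable_comp_of_integrable h

/-- The squared gradient of `φ(x₀) ψ(x₁)`, in terms of the operator norm of the derivative. -/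
lemma norm_fderiv_tensor_sq {φ ψ : ℝ → ℝ} (hφ : Differentiable ℝ φ) (hψ : Differentiable ℝ ψ)
    (x : Euc 2) :
    ‖fderiv ℝ (fun x : Euc 2 => φ (x 0) * ψ (x 1)) x‖ ^ 2 =
      deriv φ (x 0) ^ 2 * ψ (x 1) ^ 2 + φ (x 0) ^ 2 * deriv ψ (x 1) ^ 2 := by
  have hp : ∀ i : Fin 2, HasFDerivAt (fun x : Euc 2 => x i)
      (EuclideanSpace.proj (𝕜 := ℝ) (i : Fin 2)) x := fun i =>
    (EuclideanSpace.proj i : Euc 2 →L[ℝ] ℝ).hasFDerivAt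
  have h := (((hφ (x 0)).hasDerivAt.comp_hasFDerivAt x (hp 0)).mul
    ((hψ (x 1)).hasDerivAt.comp_hasFDerivAt x (hp 1))).fderiv
  have h' : fderiv ℝ (fun x : Euc 2 => φ (x 0) * ψ (x 1)) x = _ := h
  set F := fderiv ℝ (fun x : Euc 2 => φ (x 0) * ψ (x 1)) x with hF
  have hn : ‖F‖ = ‖(InnerProductSpace.toDual ℝ (Euc 2)).symm F‖ := by simp
  have hi : ∀ i, ((InnerProductSpace.toDual ℝ (Euc 2)).symm F) i
      = F (EuclideanSpace.single i 1) := fun i => by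
    have := InnerProductSpace.toDual_symm_apply (𝕜 := ℝ) (E := Euc 2)
      (x := EuclideanSpace.single i 1) (y := F)
    rw [← this, EuclideanSpace.inner_single_right]
    simp
  rw [hn, EuclideanSpace.norm_sq_eq, Fin.sum_univ_two, hi, hi, h']
  simp only [Real.norm_eq_abs, sq_abs]
  simp
  ring

lemma integral_norm_fderiv_tensor_sq {φ ψ : ℝ → ℝ} (hφ : ContDiff ℝ (⊤ : ℕ∞) φ)
    (hψ : ContDiff ℝ (⊤ : ℕ∞) ψ) (hφc : HasCompactSupport φ) (hψc : HasCompactSupport ψ) :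
    ∫ x : Euc 2, ‖fderiv ℝ (fun x : Euc 2 => φ (x 0) * ψ (x 1)) x‖ ^ 2 =
      (∫ s, deriv φ s ^ 2) * (∫ t, ψ t ^ 2) + (∫ s, φ s ^ 2) * ∫ t, deriv ψ t ^ 2 := by
  have hsqi : ∀ f : ℝ → ℝ, Continuous f → HasCompactSupport f → Integrable fun s => f s ^ 2 :=
    fun f h1 h2 => by
      have h3 : HasCompactSupport fun s => f s ^ 2 :=
        h2.comp_left (g := fun t : ℝ => t ^ 2) (by simp)
      have h4 : Continuous fun s => f s ^ 2 := by fun_prop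
      exact h4.integrable_of_hasCompactSupport h3
  have i1 := integrable_mul_euc (f := fun s => deriv φ s ^ 2) (g := fun t => ψ t ^ 2)
      (hsqi _ (hφ.continuous_deriv (by simp)) hφc.deriv) (hsqi _ hψ.continuous hψc)
  have i2 := integrable_mul_euc (f := fun s => φ s ^ 2) (g := fun t => deriv ψ t ^ 2)
      (hsqi _ hφ.continuous hφc) (hsqi _ (hψ.continuous_deriv (by simp)) hψc.deriv)
  have hpt := funext
    (norm_fderiv_tensor_sq (hφ.differentiable (by simp)) (hψ.differentiable (by simp)))
  rw [hpt, integral_add i1 i2, integral_mul_euc (fun s => deriv φ s ^ 2) (fun t => ψ t ^ 2),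
    integral_mul_euc (fun s => φ s ^ 2) (fun t => deriv ψ t ^ 2)]

/-- A subset of the half-strip containing rectangles that are arbitrarily long and almost as wide
as the strip has `λ ≤ 1`. -/
lemma lambdaLow_le_one {ω : Set (Euc 2)} (hs : ω ⊆ halfStrip)
    (hrect : ∀ L > 0, ∀ δ > 0, ∃ a : ℝ, ∀ x : Euc 2, x 0 ∈ Icc (a - L) (a + L) →
      x 1 ∈ Icc δ (Real.pi - δ) → x ∈ ω) :
    lambdaLow 2 (fun _ => 0) ω ≤ 1 := by
  refine le_of_forall_pos_le_add fun ε hε => ?_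
  obtain ⟨δ, hδ, ψ, hψ, hψs, hψ0, hψR⟩ := exists_transversal (half_pos hε)
  obtain ⟨L, hL, hφ'⟩ := exists_longitudinal (half_pos hε)
  obtain ⟨a, ha⟩ := hrect L hL δ hδ
  obtain ⟨φ, hφ, hφs, hφ0, hφR⟩ := hφ' a
  set u : Euc 2 → ℝ := fun x => φ (x 0) * ψ (x 1) with hu
  have hcu : ContDiff ℝ (⊤ : ℕ∞) u := by
    have h0 : ContDiff ℝ (⊤ : ℕ∞) fun x : Euc 2 => x 0 := by fun_prop
    have h1 : ContDiff ℝ (⊤ : ℕ∞) fun x : Euc 2 => x 1 := by fun_prop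
    exact (hφ.comp h0).mul (hψ.comp h1)
  have hsub : tsupport u ⊆ {x | x 0 ∈ Icc (a - L) (a + L) ∧ x 1 ∈ Icc δ (Real.pi - δ)} := by
    refine closure_minimal (fun x hx => ?_) ?_
    · exact ⟨hφs (subset_tsupport _ (left_ne_zero_of_mul hx)),
        hψs (subset_tsupport _ (right_ne_zero_of_mul hx))⟩
    · exact (isClosed_Icc.preimage (by fun_prop)).inter (isClosed_Icc.preimage (by fun_prop))
  have hcs : HasCompactSupport u := by
    have hK : IsCompact ((WithLp.toLp 2 : (Fin 2 → ℝ) → Euc 2) ''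
        Icc ![a - L, δ] ![a + L, Real.pi - δ]) :=
      isCompact_Icc.image (PiLp.continuous_toLp 2 _)
    refine hK.of_isClosed_subset (isClosed_tsupport u) (hsub.trans fun x hx => ?_)
    refine ⟨x.ofLp, ⟨?_, ?_⟩, rfl⟩
    · intro i; fin_cases i
      exacts [hx.1.1, hx.2.1]
    · intro i; fin_cases i
      exacts [hx.1.2, hx.2.2]
  have hsq : ∫ x, u x ^ 2 = (∫ s, φ s ^ 2) * ∫ t, ψ t ^ 2 := by
    rw [← integral_mul_euc]; simp [hu, mul_pow]
  have hne : u ≠ 0 := by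
    intro h
    rw [h] at hsq
    simp at hsq
    rcases hsq with h | h <;> linarith
  have hφc : HasCompactSupport φ := isCompact_Icc.of_isClosed_subset (isClosed_tsupport _) hφs
  have hψc : HasCompactSupport ψ := isCompact_Icc.of_isClosed_subset (isClosed_tsupport _) hψs
  have hfd := integral_norm_fderiv_tensor_sq hφ hψ hφc hψc
  -- The Rayleigh quotients are bounded below by `1`, so `sInf` is a genuine infimum.
  have hle : lambdaLow 2 (fun _ => 0) ω ≤ RayleighQ 2 (fun _ => 0) u := by
    refine csInf_le ⟨1, ?_⟩ ⟨u, hcu, hcs, hne, fun x hx => ?_, rfl⟩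
    · rintro r ⟨v, h1, h2, h3, h4, rfl⟩
      exact one_le_rayleigh h1 h2 h3 (h4.trans hs)
    · exact ha x (hsub hx).1 (hsub hx).2
  refine hle.trans ?_
  rw [rayleigh_eq, hfd, hsq, div_le_iff₀ (by positivity)]
  nlinarith [mul_le_mul_of_nonneg_right hφR hψ0.le, mul_le_mul_of_nonneg_left hψR hφ0.le]

/-! ### The cells -/

/-- The `i`-th curve separating the cells. The parameter `k (1 + sin √s) / 2` runs back and forth
through `[0, k]`; curves with index below it are pressed towards `0`, those with index above it
towards `π`, and the factor `s` makes this sharper as `s → ∞`. -/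
def wall (k i : ℕ) (s : ℝ) : ℝ :=
  Real.pi / 2 + Real.arctan (s * (i - k * ((1 + Real.sin √s) / 2)))

/-- The region of the half-strip between the `i`-th and the `(i+1)`-st curve; the indices used
are `0 ≤ i < k`. -/
def cell (k i : ℕ) : Set (Euc 2) :=
  {x | 1 < x 0 ∧ wall k i (x 0) < x 1 ∧ x 1 < wall k (i + 1) (x 0)}

lemma continuous_wall (k i : ℕ) : Continuous (wall k i) := by
  unfold wall
  have := Real.continuous_arctan
  have := Real.continuous_sqrt
  fun_prop

lemma wall_pos (k i : ℕ) (s : ℝ) : 0 < wall k i s := by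
  unfold wall
  linarith [Real.neg_pi_div_two_lt_arctan (s * (i - k * ((1 + Real.sin √s) / 2)))]

lemma wall_lt_pi (k i : ℕ) (s : ℝ) : wall k i s < Real.pi := by
  unfold wall
  linarith [Real.arctan_lt_pi_div_two (s * (i - k * ((1 + Real.sin √s) / 2)))]

lemma wall_lt_wall (k : ℕ) {i j : ℕ} (hij : i < j) {s : ℝ} (hs : 0 < s) :
    wall k i s < wall k j s := by
  unfold wall
  gcongr

lemma wall_le_wall (k : ℕ) {i j : ℕ} (hij : i ≤ j) {s : ℝ} (hs : 0 < s) :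
    wall k i s ≤ wall k j s := by
  rcases hij.eq_or_lt with rfl | h
  exacts [le_rfl, (wall_lt_wall k h hs).le]

lemma isOpen_cell (k i : ℕ) : IsOpen (cell k i) := by
  have h0 : Continuous fun x : Euc 2 => x 0 := by fun_prop
  have h1 : Continuous fun x : Euc 2 => x 1 := by fun_prop
  exact (isOpen_lt continuous_const h0).inter
    ((isOpen_lt ((continuous_wall k i).comp h0) h1).inter
      (isOpen_lt h1 ((continuous_wall k (i + 1)).comp h0)))

lemma isConnected_cell (k i : ℕ) : IsConnected (cell k i) := by
  -- The cell is the image of `(1, ∞) × (0, 1)` under linear interpolation between the walls.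
  set F : ℝ × ℝ → Euc 2 := fun p =>
    !₂[p.1, wall k i p.1 + p.2 * (wall k (i + 1) p.1 - wall k i p.1)] with hF
  have hc : Continuous F := by
    have := continuous_wall k i
    have := continuous_wall k (i + 1)
    refine (PiLp.continuous_toLp 2 _).comp (continuous_pi fun j => ?_)
    fin_cases j <;> simp <;> fun_prop
  have himg : F '' (Ioi 1 ×ˢ Ioo 0 1) = cell k i := by
    ext x
    constructor
    · rintro ⟨⟨s, t⟩, ⟨hs, ht⟩, rfl⟩
      have hs' : (1 : ℝ) < s := hs
      have hw := wall_lt_wall k i.lt_succ_self (by linarith : 0 < s)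
      have ht' : 0 < t ∧ t < 1 := ht
      refine ⟨by simpa [hF] using hs, ?_, ?_⟩
      · simp [hF]; nlinarith
      · simp [hF]; nlinarith
    · rintro ⟨h1, h2, h3⟩
      have hw : 0 < wall k (i + 1) (x 0) - wall k i (x 0) := by linarith
      refine ⟨(x 0, (x 1 - wall k i (x 0)) / (wall k (i + 1) (x 0) - wall k i (x 0))),
        ⟨h1, ?_, ?_⟩, ?_⟩
      · exact div_pos (by linarith) hw
      · exact (div_lt_one hw).2 (by linarith)
      · ext j
        fin_cases j
        · simp [hF]
        · simp [hF]; field_simp; ring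
  rw [← himg]
  refine IsConnected.image ?_ F hc.continuousOn
  exact isConnected_Ioi.prod (isConnected_Ioo one_pos)

lemma cell_subset_halfStrip (k i : ℕ) : cell k i ⊆ halfStrip := fun _ hx =>
  ⟨hx.1, (wall_pos _ _ _).trans hx.2.1, hx.2.2.trans (wall_lt_pi _ _ _)⟩

lemma disjoint_cell_of_lt (k : ℕ) {i j : ℕ} (hij : i < j) : Disjoint (cell k i) (cell k j) := by
  refine Set.disjoint_left.2 fun x hi hj => ?_
  have := wall_le_wall k (Nat.succ_le_of_lt hij) (by linarith [hi.1] : 0 < x 0)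
  exact absurd (hi.2.2.trans_le this) (not_lt.2 hj.2.1.le)

lemma isPartition_cell (k : ℕ) : IsPartition 2 halfStrip fun i : Fin k => cell k i := by
  refine ⟨fun i => isOpen_cell k i, fun i => (isConnected_cell k i).nonempty,
    fun i => cell_subset_halfStrip k i, fun i j hij => ?_⟩
  rcases lt_or_gt_of_ne hij with h | h
  · exact disjoint_cell_of_lt k h
  · exact (disjoint_cell_of_lt k h).symm

/-- Each cell contains translates of `[-L, L] × [δ, π - δ]` for all `L` and `δ`. The rectangle is
centred at `r²` where `r` is a large solution of `k (1 + sin r) / 2 = i + 1/2`; since `√` is slowly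
varying, the parameter stays within `1/4` of `i + 1/2` on `[r² - L, r² + L]`. -/
lemma exists_rect_subset_cell {k i : ℕ} (hi : i < k) {L δ : ℝ} (hL : 0 < L) (hδ : 0 < δ) :
    ∃ a : ℝ, ∀ x : Euc 2, x 0 ∈ Icc (a - L) (a + L) → x 1 ∈ Icc δ (Real.pi - δ) →
      x ∈ cell k i := by
  have hk : (0 : ℝ) < k := by exact_mod_cast (Nat.zero_le i).trans_lt hi
  have hik : (i : ℝ) + 1 ≤ k := by exact_mod_cast hi
  obtain ⟨M, hM⟩ : ∃ M, ∀ y ≥ M, Real.pi / 2 - δ < Real.arctan y := by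
    have h := tendsto_nhds_of_tendsto_nhdsWithin Real.tendsto_arctan_atTop
    exact eventually_atTop.1 (h.eventually (lt_mem_nhds (by linarith)))
  set θ := Real.arcsin ((2 * i + 1) / k - 1) with hθ
  have hsin : Real.sin θ = (2 * i + 1) / k - 1 := by
    have : (2 * (i : ℝ) + 1) / k ≤ 2 := by rw [div_le_iff₀ hk]; linarith
    have h0 : 0 ≤ (2 * (i : ℝ) + 1) / k := by positivity
    exact Real.sin_arcsin (by linarith) (by linarith)
  obtain ⟨n, hn⟩ := exists_nat_ge (2 + L + 4 * |M| + 2 * k * L - θ)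
  set r := θ + n * (2 * Real.pi) with hr
  have hrge : 2 + L + 4 * |M| + 2 * k * L ≤ r := by
    have : (n : ℝ) ≤ n * (2 * Real.pi) :=
      le_mul_of_one_le_right (Nat.cast_nonneg n) (by linarith [Real.pi_gt_three])
    linarith
  have hM0 := abs_nonneg M
  have hkL : 0 < k * L := by positivity
  have hr1 : 1 ≤ r := by nlinarith
  have hsr : Real.sin r = (2 * i + 1) / k - 1 := by rw [hr, Real.sin_add_nat_mul_two_pi, hsin]
  refine ⟨r ^ 2, fun x hx hy => ?_⟩
  set s := x 0 with hs
  have hs2 : 2 + 4 * |M| ≤ s := by nlinarith [hx.1]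
  have hs0 : 0 < s := by linarith
  have hsq : |√s - r| * r ≤ L := by
    have h1 : (√s - r) * (√s + r) = s - r ^ 2 := by
      have := Real.sq_sqrt hs0.le
      linear_combination this
    have h2 : |√s - r| * |√s + r| ≤ L := by
      rw [← abs_mul, h1, abs_le]; constructor <;> linarith [hx.1, hx.2]
    have h3 : r ≤ |√s + r| := (le_abs_self _).trans' (by linarith [Real.sqrt_nonneg s])
    exact (mul_le_mul_of_nonneg_left h3 (abs_nonneg _)).trans h2
  have hsd : |Real.sin √s - Real.sin r| ≤ |√s - r| := by
    simpa [Real.dist_eq] using Real.lipschitzWith_sin.dist_le_mul √s r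
  have hk2 : k * |√s - r| ≤ 1 / 2 := by
    have h1 : k * |√s - r| * r ≤ k * L := by
      rw [mul_assoc]; exact mul_le_mul_of_nonneg_left hsq hk.le
    by_contra! h
    nlinarith
  have hc : |k * ((1 + Real.sin √s) / 2) - (i + 1 / 2)| ≤ 1 / 4 := by
    have : k * ((1 + Real.sin √s) / 2) - (i + 1 / 2) = k / 2 * (Real.sin √s - Real.sin r) := by
      rw [hsr]; field_simp; ring
    rw [this, abs_mul, abs_of_pos (by positivity)]
    nlinarith
  have hat := hM (s / 4) (by linarith [le_abs_self M])
  rw [abs_le] at hc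
  refine ⟨by linarith, ?_, ?_⟩
  · have h : Real.arctan (s * (i - k * ((1 + Real.sin √s) / 2))) ≤ Real.arctan (-(s / 4)) :=
      Real.arctan_strictMono.monotone (by nlinarith)
    rw [Real.arctan_neg] at h
    unfold wall
    linarith [hy.1]
  · have h : Real.arctan (s / 4) ≤
        Real.arctan (s * ((i + 1 : ℕ) - k * ((1 + Real.sin √s) / 2))) :=
      Real.arctan_strictMono.monotone (by push_cast; nlinarith)
    unfold wall
    linarith [hy.2]

lemma lambdaLow_cell {k i : ℕ} (hi : i < k) : lambdaLow 2 (fun _ => 0) (cell k i) = 1 :=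
  le_antisymm
    (lambdaLow_le_one (cell_subset_halfStrip k i) fun _ hL _ hδ =>
      exists_rect_subset_cell hi hL hδ)
    (one_le_lambdaLow (isOpen_cell k i) (isConnected_cell k i).nonempty
      (cell_subset_halfStrip k i))

/-- in the half-strip `(1,∞) × (0,π)` with `V ≡ 0`, every nonempty open
subset has `λ ≥ 1`, and for every `k ≥ 1` there is a `k`-partition with connected cells
all of energy `1`; consequently `Λ_{k,∞} = 1` and `Λ_{k,p} = k^(1/p)`, attained by
partitions with connected cells. -/
theorem statement_16 :
    (∀ ω : Set (Euc 2), IsOpen ω → ω.Nonempty → ω ⊆ halfStrip →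
        1 ≤ lambdaLow 2 (fun _ => 0) ω) ∧
    ∀ k : ℕ, 1 ≤ k →
      (∃ ω : Fin k → Set (Euc 2), IsPartition 2 halfStrip ω ∧
          (∀ i, IsConnected (ω i)) ∧
          (∀ i, lambdaLow 2 (fun _ => 0) (ω i) = 1) ∧
          (⨆ i, lambdaLow 2 (fun _ => 0) (ω i)) = LamInf 2 (fun _ => 0) halfStrip k ∧
          ∀ p : ℝ, 1 ≤ p →
            (∑ i, lambdaLow 2 (fun _ => 0) (ω i) ^ p) ^ (1 / p)
              = LamP 2 (fun _ => 0) halfStrip k p) ∧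
      LamInf 2 (fun _ => 0) halfStrip k = 1 ∧
      ∀ p : ℝ, 1 ≤ p → LamP 2 (fun _ => 0) halfStrip k p = (k : ℝ) ^ (1 / p) := by
  refine ⟨fun ω ho hne hs => one_le_lambdaLow ho hne hs, fun k hk => ?_⟩
  have : Nonempty (Fin k) := ⟨⟨0, hk⟩⟩
  have hcell : ∀ i : Fin k, lambdaLow 2 (fun _ => 0) (cell k i) = 1 :=
    fun i => lambdaLow_cell i.2
  have hone : ∀ ω : Fin k → Set (Euc 2), IsPartition 2 halfStrip ω →
      ∀ i, 1 ≤ lambdaLow 2 (fun _ => 0) (ω i) :=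
    fun ω h i => one_le_lambdaLow (h.1 i) (h.2.1 i) (h.2.2.1 i)
  have hInf : LamInf 2 (fun _ => 0) halfStrip k = 1 := by
    refine IsLeast.csInf_eq ⟨⟨_, isPartition_cell k, ?_⟩, ?_⟩
    · simp [hcell]
    · rintro r ⟨ω, hω, rfl⟩
      exact (hone ω hω (Classical.arbitrary _)).trans
        (le_ciSup (f := fun i => lambdaLow 2 (fun _ => 0) (ω i)) (Set.finite_range _).bddAbove _)
  have hP : ∀ p : ℝ, 1 ≤ p → LamP 2 (fun _ => 0) halfStrip k p = (k : ℝ) ^ (1 / p) := by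
    intro p hp
    refine IsLeast.csInf_eq ⟨⟨_, isPartition_cell k, ?_⟩, ?_⟩
    · simp [hcell]
    · rintro r ⟨ω, hω, rfl⟩
      refine Real.rpow_le_rpow (by positivity) ?_ (by positivity)
      calc (k : ℝ) = ∑ _i : Fin k, (1 : ℝ) := by simp
        _ ≤ _ := Finset.sum_le_sum fun i _ => Real.one_le_rpow (hone ω hω i) (by linarith)
  refine ⟨⟨fun i => cell k i, isPartition_cell k, fun i => isConnected_cell k i, hcell, ?_, ?_⟩,
    hInf, hP⟩
  · simp [hcell, hInf]
  · intro p hp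
    simp [hcell, hP p hp]
end
end
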